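/- Let G be a connected, simple graph with maximum degree at most 3, nonnegative Ricci curvature, and diameter at least 6, and let P = v_0 v_1 ⋯ v_l be a geodesic path with l ≥ 4. If for some i with 1 ≤ i ≤ l − 1 the vertex v_i has a neighbor u_i ∉ {v_{i−1}, v_{i+1}} with d(v_0, u_i) = i + 1, then for every j with 1 ≤ j ≤ i, the vertex v_j has a neighbor u_j ∉ {v_{j−1}, v_{j+1}} with d(v_0, u_j) = j + 1. -/

import Mathlib

/-!
Write `ρ` for the distance from `v 0`. It is 1-Lipschitz, so nonnegative curvature makes its
Laplacian nonincreasing along the geodesic. Now `Δρ x` is the number of neighbors of `x` farther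
from `v 0` minus the number of those closer to `v 0`. A second farther neighbor of `v i` and the
degree bound force `Δρ (v i) ≥ 1`, hence `Δρ (v j) ≥ 1` for `1 ≤ j ≤ i`; as `v (j - 1)` is closer
to `v 0` than `v j`, there are at least two farther neighbors of `v j`.
-/

open SimpleGraph

variable {V : Type*}

/-- Combinatorial (unnormalized) graph Laplacian. -/
def lapl (G : SimpleGraph V) [G.LocallyFinite] (f : V → ℝ) (x : V) : ℝ :=
  ∑ y ∈ G.neighborFinset x, (f y - f x)

/-- Lin-Lu-Yau-Ollivier Ricci curvature (limit-free definition):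
`κ(u,v) = inf { Δf(u) − Δf(v) : f 1-Lipschitz w.r.t. graph distance, f v − f u = 1 }`. -/
noncomputable def ricci (G : SimpleGraph V) [G.LocallyFinite] (u v : V) : ℝ :=
  sInf { r : ℝ | ∃ f : V → ℝ,
    (∀ x y : V, |f x - f y| ≤ (G.dist x y : ℝ)) ∧ f v - f u = 1 ∧
    r = lapl G f u - lapl G f v }

/-- Nonnegative Ricci curvature on every edge. -/
def NonnegRicci (G : SimpleGraph V) [G.LocallyFinite] : Prop :=
  ∀ u v : V, G.Adj u v → 0 ≤ ricci G u v

open scoped Finset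

section Curvature

variable {G : SimpleGraph V} [G.LocallyFinite] {f : V → ℝ} {u v : V}

lemma abs_lapl_le_degree {x : V} (hf : ∀ y, G.Adj x y → |f y - f x| ≤ 1) :
    |lapl G f x| ≤ G.degree x :=
  calc |lapl G f x| ≤ ∑ y ∈ G.neighborFinset x, |f y - f x| := Finset.abs_sum_le_sum_abs _ _
    _ ≤ ∑ _y ∈ G.neighborFinset x, (1 : ℝ) :=
      Finset.sum_le_sum fun y hy => hf y ((G.mem_neighborFinset x y).1 hy)
    _ = G.degree x := by simp

lemma ricci_le_lapl_sub_lapl (hf : ∀ x y : V, |f x - f y| ≤ (G.dist x y : ℝ))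
    (huv : f v - f u = 1) : ricci G u v ≤ lapl G f u - lapl G f v := by
  refine csInf_le ⟨-(G.degree u + G.degree v : ℝ), ?_⟩ ⟨f, hf, huv, rfl⟩
  rintro r ⟨g, hg, -, rfl⟩
  have habs (x : V) : |lapl G g x| ≤ G.degree x := abs_lapl_le_degree fun y hxy => by
    simpa [dist_eq_one_iff_adj.2 hxy.symm] using hg y x
  linarith [neg_le_of_abs_le (habs u), le_of_abs_le (habs v)]

lemma NonnegRicci.lapl_le_lapl (hric : NonnegRicci G)
    (hf : ∀ x y : V, |f x - f y| ≤ (G.dist x y : ℝ)) (hadj : G.Adj u v) (huv : f v - f u = 1) :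
    lapl G f v ≤ lapl G f u :=
  sub_nonneg.1 ((hric u v hadj).trans (ricci_le_lapl_sub_lapl hf huv))

end Curvature

section DistFrom

/-- The distance from the vertex `o`, real-valued so that `lapl` applies to it. -/
noncomputable def distFrom (G : SimpleGraph V) (o x : V) : ℝ := G.dist o x

/-- The neighbors of `x` one step farther from `o` than `x` is. -/
noncomputable def upNeighborFinset (G : SimpleGraph V) [G.LocallyFinite] (o x : V) : Finset V :=
  {y ∈ G.neighborFinset x | G.dist o y = G.dist o x + 1}

/-- The neighbors of `x` one step closer to `o` than `x` is. The condition is written as an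
addition to avoid truncated subtraction at `x = o`. -/
noncomputable def downNeighborFinset (G : SimpleGraph V) [G.LocallyFinite] (o x : V) : Finset V :=
  {y ∈ G.neighborFinset x | G.dist o y + 1 = G.dist o x}

variable {G : SimpleGraph V} {o x y : V}

lemma abs_distFrom_sub_distFrom_le (hconn : G.Connected) (o x y : V) :
    |distFrom G o x - distFrom G o y| ≤ (G.dist x y : ℝ) := by
  have hx : G.dist o x ≤ G.dist o y + G.dist x y := by
    simpa only [G.dist_comm (u := x)] using hconn.dist_triangle (u := o) (v := y) (w := x)
  have hy : G.dist o y ≤ G.dist o x + G.dist x y := hconn.dist_triangle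
  rw [abs_sub_le_iff, sub_le_iff_le_add', sub_le_iff_le_add', distFrom, distFrom]
  exact ⟨mod_cast hx, mod_cast hy⟩

variable [G.LocallyFinite]

lemma mem_upNeighborFinset :
    y ∈ upNeighborFinset G o x ↔ G.Adj x y ∧ G.dist o y = G.dist o x + 1 := by
  simp [upNeighborFinset]

lemma mem_downNeighborFinset :
    y ∈ downNeighborFinset G o x ↔ G.Adj x y ∧ G.dist o y + 1 = G.dist o x := by
  simp [downNeighborFinset]

lemma card_upNeighborFinset_add_card_downNeighborFinset_le_degree (o x : V) :
    #(upNeighborFinset G o x) + #(downNeighborFinset G o x) ≤ G.degree x := by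
  classical
  have hdisj : Disjoint (upNeighborFinset G o x) (downNeighborFinset G o x) :=
    Finset.disjoint_filter.2 fun _ _ hup hdown => by omega
  rw [← Finset.card_union_of_disjoint hdisj, ← G.card_neighborFinset_eq_degree]
  exact Finset.card_le_card
    (Finset.union_subset (Finset.filter_subset _ _) (Finset.filter_subset _ _))

lemma lapl_distFrom (o x : V) :
    lapl G (distFrom G o) x = (#(upNeighborFinset G o x) : ℝ) - #(downNeighborFinset G o x) := by
  have hterm : ∀ y ∈ G.neighborFinset x, distFrom G o y - distFrom G o x =
      (if G.dist o y = G.dist o x + 1 then (1 : ℝ) else 0) -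
        (if G.dist o y + 1 = G.dist o x then (1 : ℝ) else 0) := by
    intro y hy
    have hdist := ((G.mem_neighborFinset x y).1 hy).diff_dist_adj (u := o)
    obtain heq | hup | hdown : G.dist o y = G.dist o x ∨ G.dist o y = G.dist o x + 1 ∨
        G.dist o x = G.dist o y + 1 := by omega
    · simp [distFrom, heq]
    · simp [distFrom, hup, add_assoc]
    · simp [distFrom, hdown, add_assoc]
  rw [lapl, Finset.sum_congr rfl hterm, Finset.sum_sub_distrib, Finset.sum_boole, Finset.sum_boole]
  rfl

lemma one_le_lapl_distFrom (hdeg : G.degree x < 2 * #(upNeighborFinset G o x)) :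
    1 ≤ lapl G (distFrom G o) x := by
  have hcard := (card_upNeighborFinset_add_card_downNeighborFinset_le_degree o x).trans_lt hdeg
  rw [lapl_distFrom, le_sub_iff_add_le']
  exact_mod_cast (by omega : #(downNeighborFinset G o x) + 1 ≤ #(upNeighborFinset G o x))

lemma exists_mem_upNeighborFinset_ne (hlapl : 1 ≤ lapl G (distFrom G o) x)
    (hdown : (downNeighborFinset G o x).Nonempty) (y : V) :
    ∃ u ∈ upNeighborFinset G o x, u ≠ y := by
  rw [lapl_distFrom, le_sub_iff_add_le'] at hlapl
  have hcard : #(downNeighborFinset G o x) + 1 ≤ #(upNeighborFinset G o x) := mod_cast hlapl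
  exact Finset.exists_mem_ne (by have := hdown.card_pos; omega) y

end DistFrom

section Geodesic

/-- The geodesic paths `v 0, …, v l` of length `l`, encoded as sequences whose values beyond `l` are
arbitrary. -/
structure IsGeodesicPath (G : SimpleGraph V) (l : ℕ) (v : ℕ → V) : Prop where
  adj : ∀ i < l, G.Adj (v i) (v (i + 1))
  dist_length : G.dist (v 0) (v l) = l

variable {G : SimpleGraph V} {l : ℕ} {v : ℕ → V}

lemma IsGeodesicPath.dist_eq (hP : IsGeodesicPath G l v) {k : ℕ} (hk : k ≤ l) :
    G.dist (v 0) (v k) = k := by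
  have hstep (i : ℕ) (hi : i < l) : G.dist (v 0) (v (i + 1)) ≤ G.dist (v 0) (v i) + 1 := by
    have := (hP.adj i hi).diff_dist_adj (u := v 0)
    omega
  refine le_antisymm ?_ ?_
  · induction k with
    | zero => simp
    | succ k ih => exact (hstep k hk).trans (Nat.succ_le_succ (ih (Nat.le_of_lt hk)))
  · induction hk using Nat.decreasingInduction with
    | self => exact hP.dist_length.ge
    | of_succ k hk ih => exact Nat.le_of_succ_le_succ (ih.trans (hstep k hk))

variable [G.LocallyFinite]

lemma IsGeodesicPath.succ_mem_upNeighborFinset (hP : IsGeodesicPath G l v) {k : ℕ} (hk : k < l) :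
    v (k + 1) ∈ upNeighborFinset G (v 0) (v k) :=
  mem_upNeighborFinset.2 ⟨hP.adj k hk, by rw [hP.dist_eq hk, hP.dist_eq hk.le]⟩

lemma IsGeodesicPath.mem_downNeighborFinset_succ (hP : IsGeodesicPath G l v) {k : ℕ} (hk : k < l) :
    v k ∈ downNeighborFinset G (v 0) (v (k + 1)) :=
  mem_downNeighborFinset.2 ⟨(hP.adj k hk).symm, by rw [hP.dist_eq hk, hP.dist_eq hk.le]⟩

lemma NonnegRicci.antitoneOn_lapl_distFrom (hric : NonnegRicci G) (hconn : G.Connected)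
    (hP : IsGeodesicPath G l v) :
    AntitoneOn (fun i => lapl G (distFrom G (v 0)) (v i)) (Set.Iic l) := by
  refine antitoneOn_of_add_one_le Set.ordConnected_Iic fun i _ hi hi' => ?_
  refine hric.lapl_le_lapl (abs_distFrom_sub_distFrom_le hconn (v 0)) (hP.adj i hi') ?_
  simp [distFrom, hP.dist_eq hi, hP.dist_eq hi']

end Geodesic

theorem upward_neighbors_propagate_left_general {G : SimpleGraph V} [G.LocallyFinite]
    (hconn : G.Connected) (hric : NonnegRicci G) {l : ℕ} {v : ℕ → V}
    (hP : IsGeodesicPath G l v) {i : ℕ} (hi : i < l) (hdeg : G.degree (v i) ≤ 3)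
    (hex : ∃ u : V, G.Adj (v i) u ∧ u ≠ v (i + 1) ∧ G.dist (v 0) u = i + 1)
    {j : ℕ} (hj : 1 ≤ j) (hji : j ≤ i) :
    ∃ u : V, G.Adj (v j) u ∧ u ≠ v (j - 1) ∧ u ≠ v (j + 1) ∧ G.dist (v 0) u = j + 1 := by
  obtain ⟨w, hw, hne, hdw⟩ := hex
  have hup : 1 < #(upNeighborFinset G (v 0) (v i)) := Finset.one_lt_card.2
    ⟨w, mem_upNeighborFinset.2 ⟨hw, by rw [hdw, hP.dist_eq hi.le]⟩,
      v (i + 1), hP.succ_mem_upNeighborFinset hi, hne⟩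
  have hlapl : 1 ≤ lapl G (distFrom G (v 0)) (v j) := (one_le_lapl_distFrom (by omega)).trans
    (hric.antitoneOn_lapl_distFrom hconn hP (hji.trans hi.le) hi.le hji)
  obtain ⟨k, rfl⟩ := Nat.exists_eq_add_of_le' hj
  have hdown := hP.mem_downNeighborFinset_succ (hji.trans_lt hi).le
  obtain ⟨u, hu, hu_ne⟩ := exists_mem_upNeighborFinset_ne hlapl ⟨v k, hdown⟩ (v (k + 1 + 1))
  obtain ⟨hadju, hdu⟩ := mem_upNeighborFinset.1 hu
  refine ⟨u, hadju, ?_, hu_ne, by rw [hdu, hP.dist_eq (hji.trans hi.le)]⟩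
  rintro rfl
  have hdk : G.dist (v 0) (v k) + 1 = G.dist (v 0) (v (k + 1)) := (mem_downNeighborFinset.1 hdown).2
  rw [Nat.add_sub_cancel] at hdu
  omega

/-- Let `P = v 0, …, v l` (`l ≥ 4`) be a geodesic path in a connected
simple graph `G` with maximum degree at most 3, nonnegative Ricci curvature and diameter
at least 6. If some `v i` (`1 ≤ i ≤ l − 1`) has a third neighbor at distance `i + 1` from
`v 0`, then so does every `v j` with `1 ≤ j ≤ i`. -/
theorem upward_neighbors_propagate_left (G : SimpleGraph V) [G.LocallyFinite]
    (hconn : G.Connected) (hdeg : ∀ x : V, G.degree x ≤ 3) (hric : NonnegRicci G)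
    (hdiam : ∃ x y : V, 6 ≤ G.dist x y)
    (l : ℕ) (hl : 4 ≤ l) (v : ℕ → V)
    (hadj : ∀ i < l, G.Adj (v i) (v (i + 1)))
    (hinj : ∀ i ≤ l, ∀ j ≤ l, v i = v j → i = j)
    (hgeo : G.dist (v 0) (v l) = l)
    (i : ℕ) (hi1 : 1 ≤ i) (hi2 : i ≤ l - 1)
    (hex : ∃ u : V, G.Adj (v i) u ∧ u ≠ v (i - 1) ∧ u ≠ v (i + 1) ∧
      G.dist (v 0) u = i + 1) :
    ∀ j : ℕ, 1 ≤ j → j ≤ i →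
      ∃ u : V, G.Adj (v j) u ∧ u ≠ v (j - 1) ∧ u ≠ v (j + 1) ∧
        G.dist (v 0) u = j + 1 := by
  obtain ⟨u, hu, -, hne, hdist⟩ := hex
  exact fun j hj hji => upward_neighbors_propagate_left_general hconn hric ⟨hadj, hgeo⟩
    (by omega) (hdeg (v i)) ⟨u, hu, hne, hdist⟩ hj hji
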